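/- Local deflation preserving the eigenvalue ordering: let K = Σ_{e=1}^N L_e^T·K_e·L_e with each K_e ∈ ℝ^{m×m} symmetric positive semidefinite, and M = Σ_{e=1}^N L_e^T·M_e·L_e with each M_e ∈ ℝ^{m×m} symmetric positive definite. Fix 0 < r < m and assume λ_{m−r}(K_e, M_e) > 0 for every e. For each e, let U_{e,2} ∈ ℝ^{m×r} be M_e-orthonormal generalized eigenvectors of (K_e, M_e) associated with the r largest generalized eigenvalues λ_{m−r+1}(K_e,M_e),…,λ_m(K_e,M_e) (collected in the diagonal matrix D_{e,2}), set V_e = M_e·U_{e,2} and M̄_e = M_e + V_e·g_e(D_{e,2})·V_e^T with g_e(λ) = λ/λ_{m−r}(K_e,M_e) − 1, and let M̄ = Σ_{e=1}^N L_e^T·M̄_e·L_e. Then for every i = 1,…,n: λ_i(K, M̄) ≤ λ_i(K, M) ≤ C²·λ_i(K, M̄), where C = max_e √(λ_m(K_e,M_e)/λ_{m−r}(K_e,M_e)); equivalently, 1 ≤ ω_i/ω̄_i ≤ max_e (ω_{m,e}/ω_{m−r,e}) wherever ω̄_i > 0, with ω_{j,e} = √λ_j(K_e,M_e). -/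

import Mathlib

open Matrix

/-- The eigenvalues of a symmetric real matrix listed in ascending order with multiplicity. -/
noncomputable def sortedEigs {n : ℕ} (M : Matrix (Fin n) (Fin n) ℝ) : Fin n → ℝ :=
  if h : M.IsHermitian then h.eigenvalues ∘ Tuple.sort h.eigenvalues else 0

-- The generalized eigenvalues `λ_1(A,B) ≤ … ≤ λ_n(A,B)`: the eigenvalues of
-- `B^{-1/2} A B^{-1/2}` in ascending order with multiplicity (`B` positive definite).
open Classical MatrixOrder in
noncomputable def genEigs {n : ℕ} (A B : Matrix (Fin n) (Fin n) ℝ) : Fin n → ℝ :=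
  if hB : B.PosDef then sortedEigs ((CFC.sqrt B)⁻¹ * A * (CFC.sqrt B)⁻¹) else 0

/-- The Boolean connectivity matrix `L_e` of an element whose local-to-global map is `σ`:
its rows are the standard basis vectors of `ℝ^n` selected by `σ`. -/
def elemL {ι : Type*} {n : ℕ} (σ : ι → Fin n) : Matrix ι (Fin n) ℝ :=
  Matrix.of fun i j => if σ i = j then 1 else 0

/-!
By simultaneous diagonalization, `λᵢ(A, B)` is attained as the smallest value of `xᵀAx / xᵀBx` on a
subspace of dimension `n - i + 1` and as the largest one on a subspace of dimension `i`. Such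
subspaces for two pencils `(A, B)` and `(A, B')` share a nonzero vector, so for `A ⪰ 0` the
Loewner bound `B' ⪯ c B` gives `λᵢ(A, B) ≤ c λᵢ(A, B')`.

It remains to compare `M` with `M̄`. Both assembly and `A ↦ Lᵀ A L` are monotone, so it suffices to
have `Mₑ ⪯ M̄ₑ ⪯ C² Mₑ` on every element. The weights lie in `[0, C² - 1]`, and Bessel's inequality
`Mₑ Uₑ (Mₑ Uₑ)ᵀ ⪯ Mₑ` for `Mₑ`-orthonormal `Uₑ` turns this into the two Loewner bounds.
-/

open scoped MatrixOrder

section CongruenceTransforms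

variable {n ι : Type*} [Fintype n]

theorem posSemidef_transpose_mul_mul_same [Finite ι] {A : Matrix n n ℝ} (hA : A.PosSemidef)
    (V : Matrix n ι ℝ) : (Vᵀ * A * V).PosSemidef := by
  simpa only [conjTranspose_eq_transpose_of_trivial] using hA.conjTranspose_mul_mul_same V

theorem mulVec_dotProduct_mulVec_mulVec [Fintype ι] (A : Matrix n n ℝ) (V : Matrix n ι ℝ)
    (y : ι → ℝ) : (V *ᵥ y) ⬝ᵥ (A *ᵥ (V *ᵥ y)) = y ⬝ᵥ ((Vᵀ * A * V) *ᵥ y) := by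
  rw [← mulVec_mulVec, ← mulVec_mulVec, dotProduct_mulVec y, vecMul_transpose]

theorem dotProduct_mulVec_le_of_le {A B : Matrix n n ℝ} (hAB : A ≤ B) (x : n → ℝ) :
    x ⬝ᵥ (A *ᵥ x) ≤ x ⬝ᵥ (B *ᵥ x) := by
  have hdiff := (Matrix.le_iff.1 hAB).dotProduct_mulVec_nonneg x
  rwa [star_trivial, sub_mulVec, dotProduct_sub, sub_nonneg] at hdiff

end CongruenceTransforms

section Pencils

/-- The columns of `V` are `B`-orthonormal and `A`-orthogonal, with `d` the values of the quadratic
form of `A` on them. For square `V` this is a simultaneous diagonalization of the pencil `(A, B)`;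
rectangular `V` are allowed so that one can restrict to some of the eigenvectors. -/
structure DiagonalizesPencil {n ι : Type*} [Fintype n] [DecidableEq ι]
    (A B : Matrix n n ℝ) (V : Matrix n ι ℝ) (d : ι → ℝ) : Prop where
  gram : Vᵀ * B * V = 1
  energy : Vᵀ * A * V = diagonal d

namespace DiagonalizesPencil

variable {n ι κ : Type*} [Fintype n] [DecidableEq ι] [DecidableEq κ]
  {A B : Matrix n n ℝ} {V : Matrix n ι ℝ} {d : ι → ℝ}

theorem submatrix (h : DiagonalizesPencil A B V d) {f : κ → ι} (hf : Function.Injective f) :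
    DiagonalizesPencil A B (V.submatrix id f) (d ∘ f) where
  gram := by
    change (Vᵀ * B * V).submatrix f f = 1
    rw [h.gram, submatrix_one f hf]
  energy := by
    change (Vᵀ * A * V).submatrix f f = _
    rw [h.energy, submatrix_diagonal d f hf]

theorem of_congruence {k : Type*} [Fintype k] {S : Matrix n k ℝ} {V : Matrix k ι ℝ}
    (h : DiagonalizesPencil (Sᵀ * A * S) (Sᵀ * B * S) V d) :
    DiagonalizesPencil A B (S * V) d where
  gram := by simpa only [transpose_mul, Matrix.mul_assoc] using h.gram
  energy := by simpa only [transpose_mul, Matrix.mul_assoc] using h.energy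

theorem nonneg [Finite ι] (h : DiagonalizesPencil A B V d) (hA : A.PosSemidef) (j : ι) :
    0 ≤ d j := by
  have hdiag := posSemidef_transpose_mul_mul_same hA V
  rw [h.energy] at hdiag
  exact posSemidef_diagonal_iff.1 hdiag j

variable [Fintype ι]

theorem dotProduct_gram (h : DiagonalizesPencil A B V d) (y : ι → ℝ) :
    (V *ᵥ y) ⬝ᵥ (B *ᵥ (V *ᵥ y)) = y ⬝ᵥ y := by
  rw [mulVec_dotProduct_mulVec_mulVec, h.gram, one_mulVec]

theorem dotProduct_energy (h : DiagonalizesPencil A B V d) (y : ι → ℝ) :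
    (V *ᵥ y) ⬝ᵥ (A *ᵥ (V *ᵥ y)) = ∑ j, d j * (y j * y j) := by
  rw [mulVec_dotProduct_mulVec_mulVec, h.energy]
  simp only [dotProduct, mulVec_diagonal, mul_left_comm]

theorem mulVec_injective (h : DiagonalizesPencil A B V d) : Function.Injective V.mulVec := by
  refine Function.LeftInverse.injective (g := (Vᵀ * B).mulVec) fun y => ?_
  rw [mulVec_mulVec, h.gram, one_mulVec]

theorem mul_gram_le_energy (h : DiagonalizesPencil A B V d) {a : ℝ} (ha : ∀ j, a ≤ d j)
    (y : ι → ℝ) : a * ((V *ᵥ y) ⬝ᵥ (B *ᵥ (V *ᵥ y))) ≤ (V *ᵥ y) ⬝ᵥ (A *ᵥ (V *ᵥ y)) := by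
  rw [h.dotProduct_gram, h.dotProduct_energy, dotProduct, Finset.mul_sum]
  gcongr with j
  · exact mul_self_nonneg _
  · exact ha j

theorem energy_le_mul_gram (h : DiagonalizesPencil A B V d) {b : ℝ} (hb : ∀ j, d j ≤ b)
    (y : ι → ℝ) : (V *ᵥ y) ⬝ᵥ (A *ᵥ (V *ᵥ y)) ≤ b * ((V *ᵥ y) ⬝ᵥ (B *ᵥ (V *ᵥ y))) := by
  rw [h.dotProduct_gram, h.dotProduct_energy, dotProduct, Finset.mul_sum]
  gcongr with j
  · exact mul_self_nonneg _
  · exact hb j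

end DiagonalizesPencil

theorem exists_ne_zero_mulVec_eq_mulVec {𝕜 n ι κ : Type*} [Field 𝕜] [Fintype n] [Fintype ι]
    [Fintype κ] {V : Matrix n ι 𝕜} {W : Matrix n κ 𝕜} (hV : Function.Injective V.mulVec)
    (hW : Function.Injective W.mulVec)
    (hcard : Fintype.card n < Fintype.card ι + Fintype.card κ) :
    ∃ y ≠ 0, ∃ z, V *ᵥ y = W *ᵥ z := by
  by_contra! hne
  have hdisj : Disjoint (LinearMap.range V.mulVecLin) (LinearMap.range W.mulVecLin) := by
    rw [Submodule.disjoint_def]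
    rintro _ ⟨y, rfl⟩ ⟨z, hz⟩
    by_cases hy : y = 0
    · rw [hy, map_zero]
    · exact absurd hz.symm (hne y hy z)
  have hdim := Submodule.finrank_add_finrank_le_of_disjoint hdisj
  rw [LinearMap.finrank_range_of_inj (f := V.mulVecLin) hV,
    LinearMap.finrank_range_of_inj (f := W.mulVecLin) hW] at hdim
  simp only [Module.finrank_fintype_fun_eq_card] at hdim
  exact hcard.not_ge hdim

theorem DiagonalizesPencil.le_mul_of_le_smul {n ι κ : Type*} [Fintype n] [Fintype ι] [Fintype κ]
    [DecidableEq ι] [DecidableEq κ] {A B B' : Matrix n n ℝ} {V : Matrix n ι ℝ} {W : Matrix n κ ℝ}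
    {d : ι → ℝ} {d' : κ → ℝ} (hV : DiagonalizesPencil A B V d) (hW : DiagonalizesPencil A B' W d')
    (hcard : Fintype.card n < Fintype.card ι + Fintype.card κ) {a b c : ℝ}
    (ha : ∀ j, a ≤ d j) (hb : ∀ j, d' j ≤ b) (hb0 : 0 ≤ b) (hBB' : B' ≤ c • B) :
    a ≤ c * b := by
  obtain ⟨y, hy, z, hyz⟩ :=
    exists_ne_zero_mulVec_eq_mulVec hV.mulVec_injective hW.mulVec_injective hcard
  set x := V *ᵥ y with hx
  have hxB : 0 < x ⬝ᵥ (B *ᵥ x) := by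
    rw [hx, hV.dotProduct_gram]
    simpa only [star_trivial] using dotProduct_star_self_pos_iff.2 hy
  refine le_of_mul_le_mul_right ?_ hxB
  calc a * (x ⬝ᵥ (B *ᵥ x)) ≤ x ⬝ᵥ (A *ᵥ x) := hV.mul_gram_le_energy ha y
    _ ≤ b * (x ⬝ᵥ (B' *ᵥ x)) := hyz ▸ hW.energy_le_mul_gram hb z
    _ ≤ b * (x ⬝ᵥ ((c • B) *ᵥ x)) := by gcongr; exact dotProduct_mulVec_le_of_le hBB' x
    _ = c * b * (x ⬝ᵥ (B *ᵥ x)) := by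
      rw [smul_mulVec, dotProduct_smul, smul_eq_mul, mul_left_comm, mul_assoc]

end Pencils

section GeneralizedEigenvalues

variable {n : ℕ} {A B B' : Matrix (Fin n) (Fin n) ℝ}

theorem sortedEigs_monotone (A : Matrix (Fin n) (Fin n) ℝ) : Monotone (sortedEigs A) := by
  unfold sortedEigs
  split_ifs
  · exact Tuple.monotone_sort _
  · exact monotone_const

theorem genEigs_monotone (A B : Matrix (Fin n) (Fin n) ℝ) : Monotone (genEigs A B) := by
  unfold genEigs
  split_ifs
  · exact sortedEigs_monotone _
  · exact monotone_const

theorem diagonalizesPencil_one_eigenvalues {n : Type*} [Fintype n] [DecidableEq n]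
    {A : Matrix n n ℝ} (hA : A.IsHermitian) :
    DiagonalizesPencil A 1 (hA.eigenvectorUnitary : Matrix n n ℝ) hA.eigenvalues where
  gram := by
    rw [Matrix.mul_one, ← conjTranspose_eq_transpose_of_trivial, ← star_eq_conjTranspose]
    exact Unitary.coe_star_mul_self hA.eigenvectorUnitary
  energy := by
    have hspec := hA.conjStarAlgAut_star_eigenvectorUnitary
    rw [Unitary.conjStarAlgAut_star_apply, star_eq_conjTranspose,
      conjTranspose_eq_transpose_of_trivial] at hspec
    exact hspec

theorem exists_diagonalizesPencil_one_sortedEigs (hA : A.IsHermitian) :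
    ∃ Q : Matrix (Fin n) (Fin n) ℝ, DiagonalizesPencil A 1 Q (sortedEigs A) := by
  rw [sortedEigs, dif_pos hA]
  exact ⟨_, (diagonalizesPencil_one_eigenvalues hA).submatrix (Equiv.injective _)⟩

theorem exists_diagonalizesPencil_genEigs (hA : A.IsHermitian) (hB : B.PosDef) :
    ∃ V : Matrix (Fin n) (Fin n) ℝ, DiagonalizesPencil A B V (genEigs A B) := by
  have hBnonneg : 0 ≤ B := hB.posSemidef.nonneg
  set R := (CFC.sqrt B)⁻¹ with hR
  have hRsymm : Rᵀ = R := by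
    rw [← conjTranspose_eq_transpose_of_trivial]
    exact (CFC.sqrt_nonneg B).posSemidef.1.inv
  have hsqrt : IsUnit (CFC.sqrt B).det :=
    (isUnit_iff_isUnit_det _).1 ((CFC.isUnit_sqrt_iff B hBnonneg).2 hB.isUnit)
  have hRBR : Rᵀ * B * R = 1 := by
    rw [hRsymm, hR]
    nth_rw 2 [← CFC.sqrt_mul_sqrt_self B hBnonneg]
    rw [nonsing_inv_mul_cancel_left _ _ hsqrt, mul_nonsing_inv _ hsqrt]
  have hRAR : (Rᵀ * A * R).IsHermitian := by
    simpa only [conjTranspose_eq_transpose_of_trivial] using isHermitian_conjTranspose_mul_mul R hA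
  have hgen : genEigs A B = sortedEigs (Rᵀ * A * R) := by
    rw [hRsymm, genEigs, dif_pos hB]
  obtain ⟨Q, hQ⟩ := exists_diagonalizesPencil_one_sortedEigs hRAR
  rw [← hRBR, ← hgen] at hQ
  exact ⟨R * Q, hQ.of_congruence⟩

theorem genEigs_le_mul_of_le_smul (hA : A.PosSemidef) (hB : B.PosDef) (hB' : B'.PosDef) {c : ℝ}
    (hBB' : B' ≤ c • B) (i : Fin n) : genEigs A B i ≤ c * genEigs A B' i := by
  obtain ⟨V, hV⟩ := exists_diagonalizesPencil_genEigs hA.1 hB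
  obtain ⟨W, hW⟩ := exists_diagonalizesPencil_genEigs hA.1 hB'
  have hupper := hV.submatrix (Subtype.val_injective (p := (· ∈ Finset.Ici i)))
  have hlower := hW.submatrix (Subtype.val_injective (p := (· ∈ Finset.Iic i)))
  refine hupper.le_mul_of_le_smul hlower ?_ (fun j => ?_) (fun j => ?_) (hW.nonneg hA i) hBB'
  · simp only [Fintype.card_fin, Fintype.card_coe, Fin.card_Ici, Fin.card_Iic]
    omega
  · exact genEigs_monotone A B (Finset.mem_Ici.1 j.2)
  · exact genEigs_monotone A B' (Finset.mem_Iic.1 j.2)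

end GeneralizedEigenvalues

section Deflation

variable {n ι : Type*} [Fintype ι] [DecidableEq ι]

theorem posSemidef_mul_diagonal_mul_transpose [Finite n] (V : Matrix n ι ℝ) {g : ι → ℝ}
    (hg : ∀ j, 0 ≤ g j) : (V * diagonal g * Vᵀ).PosSemidef := by
  simpa only [transpose_transpose] using
    posSemidef_transpose_mul_mul_same (PosSemidef.diagonal hg) Vᵀ

variable [Fintype n] {M : Matrix n n ℝ} {U : Matrix n ι ℝ} {g : ι → ℝ}

/-- The mass matrix `M̄ = M + V · diag g · Vᵀ`, `V = M U`, obtained from `M` by deflation along the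
columns of `U` with weights `g`. -/
def deflate (M : Matrix n n ℝ) (U : Matrix n ι ℝ) (g : ι → ℝ) : Matrix n n ℝ :=
  M + M * U * diagonal g * (M * U)ᵀ

theorem le_deflate (hg : ∀ j, 0 ≤ g j) : M ≤ deflate M U g :=
  le_add_of_nonneg_right (posSemidef_mul_diagonal_mul_transpose (M * U) hg).nonneg

theorem posDef_deflate (hM : M.PosDef) (hg : ∀ j, 0 ≤ g j) : (deflate M U g).PosDef :=
  hM.add_posSemidef (posSemidef_mul_diagonal_mul_transpose (M * U) hg)

theorem mul_mul_transpose_le_of_orthonormal (hM : M.PosSemidef) (hU : Uᵀ * M * U = 1) :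
    M * U * (M * U)ᵀ ≤ M := by
  classical
  have hMt : Mᵀ = M := (conjTranspose_eq_transpose_of_trivial M).symm.trans hM.1
  -- `1 - U Uᵀ M` is the `M`-orthogonal projection along the columns of `U`.
  have hproj : (1 - U * (M * U)ᵀ)ᵀ * M * (1 - U * (M * U)ᵀ) = M - M * U * (M * U)ᵀ := by
    have hMUU : M * U * Uᵀ * M * U = M * U := by
      rw [Matrix.mul_assoc (M * U), Matrix.mul_assoc (M * U), hU, Matrix.mul_one]
    simp only [transpose_sub, transpose_one, transpose_mul, transpose_transpose, hMt,
      Matrix.sub_mul, Matrix.mul_sub, Matrix.one_mul, Matrix.mul_one, ← Matrix.mul_assoc, hMUU]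
    abel
  rw [Matrix.le_iff, ← hproj]
  exact posSemidef_transpose_mul_mul_same hM _

theorem deflate_le_smul (hM : M.PosSemidef) (hU : Uᵀ * M * U = 1) {c : ℝ} (hc : 1 ≤ c)
    (hg : ∀ j, g j ≤ c - 1) : deflate M U g ≤ c • M := by
  set V := M * U
  have hweights : V * diagonal g * Vᵀ ≤ (c - 1) • (V * Vᵀ) := by
    have hgap := posSemidef_mul_diagonal_mul_transpose V fun j => sub_nonneg.2 (hg j)
    rwa [← diagonal_sub, Matrix.mul_sub, Matrix.sub_mul, ← smul_one_eq_diagonal, Matrix.mul_smul,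
      Matrix.mul_one, Matrix.smul_mul, ← Matrix.le_iff] at hgap
  have hbessel : (c - 1) • (V * Vᵀ) ≤ (c - 1) • M :=
    smul_le_smul_of_nonneg_left (mul_mul_transpose_le_of_orthonormal hM hU) (sub_nonneg.2 hc)
  calc deflate M U g ≤ M + (c - 1) • M := add_le_add_right (hweights.trans hbessel) M
    _ = c • M := by rw [sub_smul, one_smul, add_sub_cancel]

end Deflation

section Assembly

variable {E n : Type*} {m : E → Type*} [Fintype E] [∀ e, Fintype (m e)]
  {L : ∀ e, Matrix (m e) n ℝ} {A A' : ∀ e, Matrix (m e) (m e) ℝ}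

/-- The assembled matrix `∑ₑ Lₑᵀ Aₑ Lₑ`. The sizes of the elements may differ and `Lₑ` may be any
matrix, not only a Boolean connectivity matrix. -/
def assemble (L : ∀ e, Matrix (m e) n ℝ) (A : ∀ e, Matrix (m e) (m e) ℝ) : Matrix n n ℝ :=
  ∑ e, (L e)ᵀ * A e * L e

theorem posSemidef_assemble [Finite n] (hA : ∀ e, (A e).PosSemidef) : (assemble L A).PosSemidef :=
  posSemidef_sum _ fun e _ => posSemidef_transpose_mul_mul_same (hA e) (L e)

theorem assemble_mono [Finite n] (hAA' : ∀ e, A e ≤ A' e) : assemble L A ≤ assemble L A' := by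
  refine Finset.sum_le_sum fun e _ => ?_
  rw [Matrix.le_iff, ← Matrix.sub_mul, ← Matrix.mul_sub]
  exact posSemidef_transpose_mul_mul_same (Matrix.le_iff.1 (hAA' e)) (L e)

theorem assemble_smul (c : ℝ) : assemble L (fun e => c • A e) = c • assemble L A := by
  simp only [assemble, Finset.smul_sum, Matrix.mul_smul, Matrix.smul_mul]

theorem posDef_assemble [Fintype n] (hL : ∀ x, (∀ e, L e *ᵥ x = 0) → x = 0)
    (hA : ∀ e, (A e).PosDef) : (assemble L A).PosDef := by
  refine .of_dotProduct_mulVec_pos (posSemidef_assemble fun e => (hA e).posSemidef).1 fun x hx => ?_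
  obtain ⟨e, he⟩ : ∃ e, L e *ᵥ x ≠ 0 := by
    by_contra! hLx
    exact hx (hL x hLx)
  rw [star_trivial, assemble, sum_mulVec, dotProduct_sum]
  simp only [← mulVec_dotProduct_mulVec_mulVec]
  refine Finset.sum_pos' (fun e _ => ?_) ⟨e, Finset.mem_univ e, ?_⟩
  · exact (hA e).posSemidef.dotProduct_mulVec_nonneg (L e *ᵥ x)
  · exact (hA e).dotProduct_mulVec_pos he

theorem elemL_mulVec {ι : Type*} {n : ℕ} (σ : ι → Fin n) (x : Fin n → ℝ) :
    elemL σ *ᵥ x = x ∘ σ := by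
  ext i
  simp [elemL, mulVec, dotProduct]

theorem eq_zero_of_elemL_mulVec_eq_zero {E : Type*} {m : E → Type*} {n : ℕ}
    {σ : ∀ e, m e → Fin n} (hσ : ∀ i, ∃ e j, σ e j = i) (x : Fin n → ℝ)
    (hx : ∀ e, elemL (σ e) *ᵥ x = 0) : x = 0 := by
  ext i
  obtain ⟨e, j, rfl⟩ := hσ i
  simpa only [elemL_mulVec, Function.comp_apply, Pi.zero_apply] using congrFun (hx e) j

end Assembly

section LocalDeflation

theorem genEigs_assemble_deflate_bounds {E : Type*} [Fintype E] {m ι : E → Type*}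
    [∀ e, Fintype (m e)] [∀ e, Fintype (ι e)] [∀ e, DecidableEq (ι e)] {n : ℕ}
    {L : ∀ e, Matrix (m e) (Fin n) ℝ} (hL : ∀ x, (∀ e, L e *ᵥ x = 0) → x = 0)
    {K : Matrix (Fin n) (Fin n) ℝ} (hK : K.PosSemidef)
    {M : ∀ e, Matrix (m e) (m e) ℝ} (hM : ∀ e, (M e).PosDef)
    {U : ∀ e, Matrix (m e) (ι e) ℝ} (hU : ∀ e, (U e)ᵀ * M e * U e = 1)
    {g : ∀ e, ι e → ℝ} {c : ℝ} (hc : 1 ≤ c) (hg0 : ∀ e j, 0 ≤ g e j)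
    (hgc : ∀ e j, g e j ≤ c - 1) (i : Fin n) :
    genEigs K (assemble L fun e => deflate (M e) (U e) (g e)) i ≤ genEigs K (assemble L M) i ∧
      genEigs K (assemble L M) i ≤
        c * genEigs K (assemble L fun e => deflate (M e) (U e) (g e)) i := by
  have hMpos := posDef_assemble hL hM
  have hMbarpos := posDef_assemble hL fun e => posDef_deflate (U := U e) (hM e) (hg0 e)
  constructor
  · rw [← one_mul (genEigs K (assemble L M) i)]
    refine genEigs_le_mul_of_le_smul hK hMbarpos hMpos ?_ i
    rw [one_smul]
    exact assemble_mono fun e => le_deflate (hg0 e)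
  · refine genEigs_le_mul_of_le_smul hK hMpos hMbarpos ?_ i
    rw [← assemble_smul]
    exact assemble_mono fun e => deflate_le_smul (hM e).posSemidef (hU e) hc (hgc e)

theorem one_le_sqrt_div_sqrt_and_le {a b c : ℝ} (hb : 0 < b) (hc : 0 ≤ c) (hba : b ≤ a)
    (hac : a ≤ c ^ 2 * b) : 1 ≤ √a / √b ∧ √a / √b ≤ c := by
  rw [← Real.sqrt_div' a hb.le]
  exact ⟨Real.one_le_sqrt.2 ((one_le_div hb).2 hba),
    Real.sqrt_le_iff.2 ⟨hc, (div_le_iff₀ hb).2 hac⟩⟩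

theorem local_deflation_ordered_bounds_general {E : Type*} [Fintype E] [Nonempty E] {m : E → ℕ}
    {ι : E → Type*} [∀ e, Fintype (ι e)] [∀ e, DecidableEq (ι e)] {n : ℕ}
    {L : ∀ e, Matrix (Fin (m e + 1)) (Fin n) ℝ} (hL : ∀ x, (∀ e, L e *ᵥ x = 0) → x = 0)
    {K M : ∀ e, Matrix (Fin (m e + 1)) (Fin (m e + 1)) ℝ}
    (hK : ∀ e, (K e).PosSemidef) (hM : ∀ e, (M e).PosDef)
    {k : ∀ e, Fin (m e + 1)} (hpos : ∀ e, 0 < genEigs (K e) (M e) (k e))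
    {s : ∀ e, ι e → Fin (m e + 1)} (hs : ∀ e j, k e ≤ s e j)
    {U : ∀ e, Matrix (Fin (m e + 1)) (ι e) ℝ} (hU : ∀ e, (U e)ᵀ * M e * U e = 1)
    {Mbar : Matrix (Fin n) (Fin n) ℝ}
    (hMbar : Mbar = assemble L fun e => deflate (M e) (U e) fun j =>
      genEigs (K e) (M e) (s e j) / genEigs (K e) (M e) (k e) - 1) (i : Fin n) :
    (genEigs (assemble L K) Mbar i ≤ genEigs (assemble L K) (assemble L M) i ∧
      genEigs (assemble L K) (assemble L M) i ≤
        (Finset.univ.sup' Finset.univ_nonempty fun e =>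
          √(genEigs (K e) (M e) (Fin.last (m e)) / genEigs (K e) (M e) (k e))) ^ 2 *
        genEigs (assemble L K) Mbar i) ∧
    (0 < genEigs (assemble L K) Mbar i →
      1 ≤ √(genEigs (assemble L K) (assemble L M) i) / √(genEigs (assemble L K) Mbar i) ∧
      √(genEigs (assemble L K) (assemble L M) i) / √(genEigs (assemble L K) Mbar i) ≤
        Finset.univ.sup' Finset.univ_nonempty fun e =>
          √(genEigs (K e) (M e) (Fin.last (m e))) / √(genEigs (K e) (M e) (k e))) := by
  simp only [← Real.sqrt_div' _ (hpos _).le]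
  set C := Finset.univ.sup' Finset.univ_nonempty fun e =>
    √(genEigs (K e) (M e) (Fin.last (m e)) / genEigs (K e) (M e) (k e))
  have hratio_le (e : E) :
      √(genEigs (K e) (M e) (Fin.last (m e)) / genEigs (K e) (M e) (k e)) ≤ C :=
    Finset.le_sup' (fun e => √(genEigs (K e) (M e) (Fin.last (m e)) / genEigs (K e) (M e) (k e)))
      (Finset.mem_univ e)
  have hC : 1 ≤ C := by
    obtain ⟨e⟩ := ‹Nonempty E›
    refine le_trans (Real.one_le_sqrt.2 ?_) (hratio_le e)
    exact (one_le_div (hpos e)).2 (genEigs_monotone _ _ (Fin.le_last _))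
  have hbounds := genEigs_assemble_deflate_bounds hL (posSemidef_assemble (L := L) hK) hM hU
    (one_le_pow₀ hC (n := 2))
    (fun e j => sub_nonneg.2 ((one_le_div (hpos e)).2 (genEigs_monotone _ _ (hs e j))))
    (fun e j => sub_le_sub_right ((div_le_div_of_nonneg_right
      (genEigs_monotone _ _ (Fin.le_last _)) (hpos e).le).trans
        (Real.sqrt_le_iff.1 (hratio_le e)).2) 1) i
  rw [← hMbar] at hbounds
  exact ⟨hbounds, fun hp => one_le_sqrt_div_sqrt_and_le hp (zero_le_one.trans hC) hbounds.1
    hbounds.2⟩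

end LocalDeflation

/-- **Local deflation preserving the eigenvalue ordering** (Corollary for strategy 2).
Let `K = Σ_e L_eᵀ·K_e·L_e` with `K_e ⪰ 0` symmetric and `M = Σ_e L_eᵀ·M_e·L_e` with `M_e ≻ 0`
symmetric. Fix `0 < r < m` and assume `λ_{m−r}(K_e,M_e) > 0` for all `e`. For each `e`, let
`U_{e,2}` collect `M_e`-orthonormal generalized eigenvectors of `(K_e,M_e)` for the `r`
largest generalized eigenvalues, set `V_e = M_e·U_{e,2}`,
`M̄_e = M_e + V_e·g_e(D_{e,2})·V_eᵀ` with `g_e(λ) = λ/λ_{m−r}(K_e,M_e) − 1`, and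
`M̄ = Σ_e L_eᵀ·M̄_e·L_e`. Then for every `i`:
`λ_i(K,M̄) ≤ λ_i(K,M) ≤ C²·λ_i(K,M̄)` with
`C = max_e √(λ_m(K_e,M_e)/λ_{m−r}(K_e,M_e))`; equivalently
`1 ≤ ω_i/ω̄_i ≤ max_e (ω_{m,e}/ω_{m−r,e})` wherever `ω̄_i > 0`. -/
theorem local_deflation_ordered_bounds {N m n pmax r : ℕ} (hpmax : 0 < pmax)
    (hr : 0 < r) (hrm : r < m + 1)
    (σ : Fin (N+1) → Fin (m+1) → Fin (n+1))
    (hinj : ∀ e, Function.Injective (σ e))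
    (hcover : ∀ i : Fin (n+1), ∃ e j, σ e j = i)
    (hp : ∀ i : Fin (n+1), (Finset.univ.filter fun e => ∃ j, σ e j = i).card ≤ pmax)
    (Ke Me : Fin (N+1) → Matrix (Fin (m+1)) (Fin (m+1)) ℝ)
    (hKe : ∀ e, (Ke e).PosSemidef) (hMe : ∀ e, (Me e).PosDef)
    (hpos : ∀ e, 0 < genEigs (Ke e) (Me e) ⟨m - r, by omega⟩)
    (emb : Fin r → Fin (m+1)) (hemb : ∀ j : Fin r, (emb j : ℕ) = m + 1 - r + (j : ℕ))
    (U2 : Fin (N+1) → Matrix (Fin (m+1)) (Fin r) ℝ)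
    (hU2 : ∀ e, (U2 e)ᵀ * Me e * U2 e = 1)
    (hU2eig : ∀ e, ∀ j : Fin r,
      Ke e *ᵥ (fun i => U2 e i j) =
        genEigs (Ke e) (Me e) (emb j) • (Me e *ᵥ fun i => U2 e i j))
    (Ve : Fin (N+1) → Matrix (Fin (m+1)) (Fin r) ℝ)
    (hVe : ∀ e, Ve e = Me e * U2 e)
    (Mbare : Fin (N+1) → Matrix (Fin (m+1)) (Fin (m+1)) ℝ)
    (hMbare : ∀ e, Mbare e = Me e +
      Ve e * Matrix.diagonal (fun j =>
        genEigs (Ke e) (Me e) (emb j) / genEigs (Ke e) (Me e) ⟨m - r, by omega⟩ - 1) *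
        (Ve e)ᵀ)
    (K M Mbar : Matrix (Fin (n+1)) (Fin (n+1)) ℝ)
    (hK : K = ∑ e, (elemL (σ e))ᵀ * Ke e * elemL (σ e))
    (hM : M = ∑ e, (elemL (σ e))ᵀ * Me e * elemL (σ e))
    (hMbar : Mbar = ∑ e, (elemL (σ e))ᵀ * Mbare e * elemL (σ e)) :
    ∀ i : Fin (n+1),
      (genEigs K Mbar i ≤ genEigs K M i ∧
        genEigs K M i ≤
          (Finset.univ.sup' Finset.univ_nonempty fun e =>
            Real.sqrt (genEigs (Ke e) (Me e) (Fin.last m) /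
              genEigs (Ke e) (Me e) ⟨m - r, by omega⟩)) ^ 2 * genEigs K Mbar i) ∧
      (0 < genEigs K Mbar i →
        1 ≤ Real.sqrt (genEigs K M i) / Real.sqrt (genEigs K Mbar i) ∧
        Real.sqrt (genEigs K M i) / Real.sqrt (genEigs K Mbar i) ≤
          Finset.univ.sup' Finset.univ_nonempty fun e =>
            Real.sqrt (genEigs (Ke e) (Me e) (Fin.last m)) /
              Real.sqrt (genEigs (Ke e) (Me e) ⟨m - r, by omega⟩)) := by
  subst hK hM hMbar
  exact local_deflation_ordered_bounds_general (eq_zero_of_elemL_mulVec_eq_zero hcover) hKe hMe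
    hpos (s := fun _ => emb) (fun _ j => by rw [Fin.le_def, hemb, Fin.val_mk]; omega) hU2
    (by simp only [hMbare, hVe, assemble, deflate])
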